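/- arXiv:math/0702576 — 2 statements merged into one kernel-verified Lean document; each statement's English description precedes it below -/
import Mathlib

section
/- Let U ⊆ ℂ² be an open set containing 0 and let V : ℂ² → ℂ² be analytic on U. For a differentiable function g : U → ℂ define X.g : U → ℂ by (X.g)(p) = (fderiv g p)(V(p)), and iteratively X⁰.g = g, Xⁿ⁺¹.g = X.(Xⁿ.g) (each iterate is again analytic on U). Then there exist r > 0 and ε > 0 such that: for every p ∈ ℂ² with ‖p‖ < r, every t ∈ [0, ε), and every curve α : ℝ → ℂ² satisfying α(0) = p and, for all s ∈ [0, t], α(s) ∈ U and α′(s) = V(α(s)) (HasDerivAt), one has for each coordinate projection π_i : ℂ² → ℂ (i = 1, 2) that the series ∑_{n=0}^∞ (tⁿ/n!)·(Xⁿ.π_i)(p) converges (HasSum) with sum π_i(α(t)). In other words, the time-t flow of V is given coordinatewise by the Lie series f^t(p) = (p₁ + ∑_{n≥1} (tⁿ/n!)(Xⁿ.π₁)(p), p₂ + ∑_{n≥1} (tⁿ/n!)(Xⁿ.π₂)(p)). -/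
/-! The idea is to compare `g ∘ α` with its Taylor polynomials, without constructing the flow.
Along a solution curve, the derivative of `(Xᵏ.g) ∘ α` is `(Xᵏ⁺¹.g) ∘ α`, so the coefficients
`(Xⁿ.g)(p) / n!` are the Taylor coefficients of `g ∘ α` at time `0`, and the remainder is controlled
by the size of `Xⁿ.g` along the curve (`norm_sub_taylor_le`).

That size is bounded by Cauchy's estimate (`norm_lieD_le`), which costs a factor `M / η` for each
application of `X` when the radius of the ball shrinks by `η`, where `M` bounds `V`. Splitting the
passage from radius `R` to `R / 2` into `n` equal steps gives `‖Xⁿ.g‖ ≤ (2 M n / R)ⁿ B`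
(`norm_iterate_lieD_le`), and `nⁿ ≤ eⁿ n!` turns this into geometric decay of both the terms and the
remainders for small times. Finally, a curve starting in the ball of radius `R / 4` cannot leave the
ball of radius `R / 2` before time `R / (4 M)` (`norm_curve_lt`). -/

open Set Nat

noncomputable section

/-- The action of the vector field `V` on a function `g`: `(X.g)(p) = Dg(p)[V(p)]`. -/
def lieD (V : ℂ × ℂ → ℂ × ℂ) (g : ℂ × ℂ → ℂ) : ℂ × ℂ → ℂ :=
  fun p => fderiv ℂ g p (V p)

end

lemma analyticOnNhd_iterate_lieD {U : Set (ℂ × ℂ)} {V : ℂ × ℂ → ℂ × ℂ}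
    (hV : AnalyticOnNhd ℂ V U) {g : ℂ × ℂ → ℂ} (hg : AnalyticOnNhd ℂ g U) (n : ℕ) :
    AnalyticOnNhd ℂ ((lieD V)^[n] g) U := by
  induction n with
  | zero => simpa using hg
  | succ n ih =>
    rw [Function.iterate_succ_apply']
    intro x hx
    have h : AnalyticAt ℂ (fderiv ℂ ((lieD V)^[n] g)) x := ih.fderiv x hx
    exact ((ContinuousLinearMap.id ℂ (ℂ × ℂ →L[ℂ] ℂ)).analyticAt_bilinear _).comp (h.prod (hV x hx))

/-- Cauchy's estimate for the derivation `X`, obtained from the one-variable estimate on the complex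
line through `x` in the direction `V x`. -/
lemma norm_lieD_le {V : ℂ × ℂ → ℂ × ℂ} {h : ℂ × ℂ → ℂ} {x : ℂ × ℂ} {ρ η M C : ℝ}
    (hη : 0 < η) (hM : ‖V x‖ < M) (hx : ‖x‖ < ρ - η)
    (hd : ∀ y, ‖y‖ < ρ → DifferentiableAt ℂ h y) (hC : ∀ y, ‖y‖ < ρ → ‖h y‖ ≤ C) :
    ‖lieD V h x‖ ≤ M / η * C := by
  have hM0 : 0 < M := (norm_nonneg _).trans_lt hM
  have key : ∀ z : ℂ, ‖z‖ ≤ η / M → ‖x + z • V x‖ < ρ := by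
    intro z hz
    have h1 : ‖z‖ * ‖V x‖ ≤ η / M * M := by gcongr
    rw [div_mul_cancel₀ _ hM0.ne'] at h1
    have h2 := norm_add_le x (z • V x)
    rw [norm_smul] at h2
    linarith
  have hline : ∀ z : ℂ, HasDerivAt (fun z : ℂ => x + z • V x) (V x) z := by
    intro z
    simpa using ((hasDerivAt_id z).smul_const (V x)).const_add x
  have hder : HasDerivAt (fun z : ℂ => h (x + z • V x)) (lieD V h x) 0 := by
    have hx' : DifferentiableAt ℂ h (x + (0 : ℂ) • V x) :=
      hd _ (key 0 (by simpa using (div_pos hη hM0).le))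
    simpa [lieD, Function.comp_def] using hx'.hasFDerivAt.comp_hasDerivAt (0 : ℂ) (hline 0)
  have hdc : DiffContOnCl ℂ (fun z : ℂ => h (x + z • V x)) (Metric.ball 0 (η / M)) := by
    apply DifferentiableOn.diffContOnCl
    intro z hz
    have hz' : ‖z‖ ≤ η / M := by
      simpa using Metric.closure_ball_subset_closedBall hz
    exact ((hd _ (key z hz')).comp z (hline z).differentiableAt).differentiableWithinAt
  have := Complex.norm_deriv_le_of_forall_mem_sphere_norm_le (div_pos hη hM0) hdc
    (C := C) (fun z hz => hC _ (key z (by simpa using (mem_sphere_iff_norm.1 hz).le)))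
  rw [hder.deriv] at this
  refine this.trans_eq ?_
  field_simp

/-- Iterated Cauchy estimate: the passage from radius `R` to radius `R / 2` is divided into `n`
steps. -/
lemma norm_iterate_lieD_le {V : ℂ × ℂ → ℂ × ℂ} {g : ℂ × ℂ → ℂ} {R M B : ℝ} (hR : 0 < R)
    (hV : AnalyticOnNhd ℂ V (Metric.ball 0 R)) (hg : AnalyticOnNhd ℂ g (Metric.ball 0 R))
    (hM : ∀ x, ‖x‖ < R → ‖V x‖ < M) (hB : ∀ x, ‖x‖ < R → ‖g x‖ ≤ B)
    (n : ℕ) {x : ℂ × ℂ} (hx : ‖x‖ < R / 2) :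
    ‖(lieD V)^[n] g x‖ ≤ (2 * M / R * n) ^ n * B := by
  have step : ∀ η : ℝ, 0 < η → ∀ k : ℕ, ∀ x, ‖x‖ < R - k * η →
      ‖(lieD V)^[k] g x‖ ≤ (M / η) ^ k * B := by
    intro η hη k
    induction k with
    | zero => intro x hx; simpa using hB x (by simpa using hx)
    | succ k ih =>
      intro x hx
      have hk : 0 ≤ (k : ℝ) * η := by positivity
      push_cast at hx
      rw [Function.iterate_succ_apply', _root_.pow_succ', mul_assoc]
      refine norm_lieD_le hη (hM x (by linarith)) (ρ := R - k * η) (by linarith) ?_ ih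
      intro y hy
      exact (analyticOnNhd_iterate_lieD hV hg k y
        (by rw [mem_ball_zero_iff]; linarith)).differentiableAt
  rcases Nat.eq_zero_or_pos n with rfl | hn
  · simpa using hB x (by linarith)
  · have hn' : (0 : ℝ) < n := by exact_mod_cast hn
    have h1 := step (R / (2 * n)) (by positivity) n x (by
      have : (n : ℝ) * (R / (2 * n)) = R / 2 := by field_simp
      linarith)
    refine h1.trans_eq ?_
    congr 2
    field_simp

/-- Taylor's formula with a remainder bound for a sequence of functions each of which is the
derivative of the preceding one. -/
lemma norm_sub_taylor_le {f : ℕ → ℝ → ℂ} {t C : ℝ} (ht : 0 ≤ t) (n : ℕ)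
    (hf : ∀ k, ∀ s ∈ Icc (0 : ℝ) t, HasDerivAt (f k) (f (k + 1) s) s)
    (hC : ∀ s ∈ Icc (0 : ℝ) t, ‖f (n + 1) s‖ ≤ C) :
    ‖f 0 t - ∑ k ∈ Finset.range (n + 1), ((t : ℂ) ^ k / k !) * f k 0‖ ≤ t ^ n / n ! * C * t := by
  -- Moving the base point `s` of the Taylor polynomial makes its derivative telescope.
  have hF : ∀ m : ℕ, ∀ s ∈ Icc (0 : ℝ) t, HasDerivAt
      (fun s : ℝ => ∑ k ∈ Finset.range (m + 1), (((t - s : ℝ) : ℂ) ^ k / k !) * f k s)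
      ((((t - s : ℝ) : ℂ) ^ m / m !) * f (m + 1) s) s := by
    intro m s hs
    induction m with
    | zero => simpa using hf 0 s hs
    | succ m ih =>
      simp_rw [Finset.sum_range_succ _ (m + 1)]
      have h1 : HasDerivAt (fun s : ℝ => ((t - s : ℝ) : ℂ)) (-1) s := by
        simpa using ((hasDerivAt_id s).const_sub t).ofReal_comp
      have h2 := ((h1.pow (m + 1)).div_const ((m + 1)! : ℂ)).mul (hf (m + 1) s hs)
      refine (ih.add h2).congr_deriv ?_
      have hm : (m ! : ℂ) ≠ 0 := by exact_mod_cast m.factorial_ne_zero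
      have hm1 : (m + 1 : ℂ) ≠ 0 := by exact_mod_cast m.succ_ne_zero
      simp only [Nat.factorial_succ, Nat.add_sub_cancel, Pi.pow_apply]
      push_cast
      field_simp
      ring
  have hmv := (convex_Icc (0 : ℝ) t).norm_image_sub_le_of_norm_hasDerivWithin_le
    (C := t ^ n / n ! * C) (fun s hs => (hF n s hs).hasDerivWithinAt) (by
      intro s hs
      rw [norm_mul, norm_div, norm_pow, Complex.norm_real, Complex.norm_natCast,
        Real.norm_of_nonneg (by linarith [hs.2])]
      have := hC s hs
      have h3 : t - s ≤ t := by linarith [hs.1]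
      have h4 : 0 ≤ t - s := by linarith [hs.2]
      gcongr) (left_mem_Icc.2 ht) (right_mem_Icc.2 ht)
  simpa [Finset.sum_range_succ', Real.norm_of_nonneg ht] using hmv

/-- A solution curve starting in the ball of radius `R / 4` stays in the ball of radius `R / 2`
as long as `M * t < R / 4`. -/
lemma norm_curve_lt {V : ℂ × ℂ → ℂ × ℂ} {R M t : ℝ} (hM : ∀ x, ‖x‖ < R → ‖V x‖ < M)
    (hR : 0 < R) (htM : M * t < R / 4) {α : ℝ → ℂ × ℂ} (h0 : ‖α 0‖ < R / 4)
    (hα : ∀ s ∈ Icc (0 : ℝ) t, HasDerivAt α (V (α s)) s) :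
    ∀ s ∈ Icc (0 : ℝ) t, ‖α s‖ < R / 2 := by
  have hM0 : 0 < M := (norm_nonneg _).trans_lt (hM 0 (by simpa using hR))
  have hle : ∀ s ∈ Icc (0 : ℝ) t, M * s ≤ M * t := fun s hs => by gcongr; exact hs.2
  intro s hs
  have := image_norm_le_of_norm_deriv_right_lt_deriv_boundary (f := α) (a := 0) (b := t)
    (f' := fun s => V (α s)) (B := fun s => R / 4 + M * s) (B' := fun _ => M)
    (fun s hs => (hα s hs).continuousAt.continuousWithinAt)
    (fun s hs => (hα s (Ico_subset_Icc_self hs)).hasDerivWithinAt)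
    (by simpa using h0.le)
    (fun s => by simpa using ((hasDerivAt_id s).const_mul M).const_add (R / 4))
    (fun s hs heq => hM _ (by
      have := hle s (Ico_subset_Icc_self hs)
      linarith)) hs
  have := hle s hs
  linarith

/-- Convergence of the Lie series of an arbitrary bounded analytic function `g`, for an explicit
range of times. -/
lemma hasSum_lie_series {V : ℂ × ℂ → ℂ × ℂ} {g : ℂ × ℂ → ℂ} {R M B : ℝ} (hR : 0 < R)
    (hV : AnalyticOnNhd ℂ V (Metric.ball 0 R)) (hg : AnalyticOnNhd ℂ g (Metric.ball 0 R))
    (hM : ∀ x, ‖x‖ < R → ‖V x‖ < M) (hB : ∀ x, ‖x‖ < R → ‖g x‖ ≤ B)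
    {t : ℝ} (ht : 0 ≤ t) (htM : 16 * (M * t) < R) {α : ℝ → ℂ × ℂ} (h0 : ‖α 0‖ < R / 4)
    (hα : ∀ s ∈ Icc (0 : ℝ) t, HasDerivAt α (V (α s)) s) :
    HasSum (fun n : ℕ => ((t : ℂ) ^ n / n !) * (lieD V)^[n] g (α 0)) (g (α t)) := by
  have hM0 : 0 < M := (norm_nonneg _).trans_lt (hM 0 (by simpa using hR))
  have hB0 : 0 ≤ B := (norm_nonneg _).trans (hB 0 (by simpa using hR))
  have hMt : 0 ≤ M * t := by positivity
  have hin := norm_curve_lt hM hR (by linarith) h0 hα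
  set q : ℝ := 2 * M / R * t * Real.exp 1 with hq
  have hq0 : 0 ≤ q := by positivity
  have hq1 : q < 1 := by
    have h1 : 2 * M / R * t < 1 / 8 := by
      rw [div_mul_eq_mul_div, div_lt_iff₀ hR]; linarith
    have h2 : q ≤ 1 / 8 * Real.exp 1 := by rw [hq]; gcongr
    linarith [Real.exp_one_lt_d9]
  have hbound : ∀ n : ℕ, t ^ n / n ! * ((2 * M / R * n) ^ n * B) ≤ q ^ n * B := by
    intro n
    have h1 : (n : ℝ) ^ n / n ! ≤ Real.exp 1 ^ n := by
      rw [← Real.exp_nat_mul, mul_one]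
      exact Real.pow_div_factorial_le_exp _ n.cast_nonneg n
    calc t ^ n / n ! * ((2 * M / R * n) ^ n * B)
        = (2 * M / R * t) ^ n * ((n : ℝ) ^ n / n !) * B := by
          rw [mul_pow _ (n : ℝ), mul_pow _ t]; ring
      _ ≤ (2 * M / R * t) ^ n * Real.exp 1 ^ n * B := by gcongr
      _ = q ^ n * B := by rw [hq, mul_pow _ (Real.exp 1)]
  have hterm : ∀ n : ℕ, ‖((t : ℂ) ^ n / n !) * (lieD V)^[n] g (α 0)‖ ≤ q ^ n * B := by
    intro n
    refine le_trans ?_ (hbound n)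
    rw [norm_mul, norm_div, norm_pow, Complex.norm_real, Complex.norm_natCast,
      Real.norm_of_nonneg ht]
    gcongr
    exact norm_iterate_lieD_le hR hV hg hM hB n (hin 0 (left_mem_Icc.2 ht))
  have hsum : Summable (fun n : ℕ => ((t : ℂ) ^ n / n !) * (lieD V)^[n] g (α 0)) :=
    Summable.of_norm_bounded ((summable_geometric_of_lt_one hq0 hq1).mul_right B) hterm
  have hder : ∀ k : ℕ, ∀ s ∈ Icc (0 : ℝ) t,
      HasDerivAt (fun s => (lieD V)^[k] g (α s)) ((lieD V)^[k + 1] g (α s)) s := by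
    intro k s hs
    have hd : DifferentiableAt ℂ ((lieD V)^[k] g) (α s) :=
      (analyticOnNhd_iterate_lieD hV hg k (α s)
        (by rw [mem_ball_zero_iff]; linarith [hin s hs])).differentiableAt
    rw [Function.iterate_succ_apply']
    exact (hd.hasFDerivAt.restrictScalars ℝ).comp_hasDerivAt s (hα s hs)
  have hrem : ∀ n : ℕ,
      ‖g (α t) - ∑ k ∈ Finset.range (n + 1), ((t : ℂ) ^ k / k !) * (lieD V)^[k] g (α 0)‖
        ≤ ((n + 1 : ℕ) * q ^ (n + 1)) * B := by
    intro n
    refine (norm_sub_taylor_le (f := fun k s => (lieD V)^[k] g (α s)) ht n hder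
      (fun s hs => norm_iterate_lieD_le hR hV hg hM hB (n + 1) (hin s hs))).trans ?_
    -- The remainder bound has `n !` in place of `(n + 1)!`, which costs the factor `n + 1`.
    have h1 := mul_le_mul_of_nonneg_left (hbound (n + 1)) (n + 1).cast_nonneg (α := ℝ)
    rw [← mul_assoc _ (q ^ (n + 1)) B] at h1
    refine le_trans (le_of_eq ?_) h1
    have hn : (n ! : ℝ) ≠ 0 := by exact_mod_cast n.factorial_ne_zero
    rw [Nat.factorial_succ, _root_.pow_succ t n]
    generalize (2 * M / R * ((n + 1 : ℕ) : ℝ)) ^ (n + 1) = A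
    push_cast
    have hn1 : (n + 1 : ℝ) ≠ 0 := by exact_mod_cast n.succ_ne_zero
    field_simp
  refine (hsum.hasSum_iff_tendsto_nat).2 ?_
  rw [← Filter.tendsto_add_atTop_iff_nat 1, tendsto_iff_norm_sub_tendsto_zero]
  have hlim : Filter.Tendsto (fun n : ℕ => ((n + 1 : ℕ) * q ^ (n + 1)) * B) Filter.atTop
      (nhds 0) := by
    simpa using ((Filter.tendsto_add_atTop_iff_nat 1).2
      (tendsto_self_mul_const_pow_of_lt_one hq0 hq1)).mul_const B
  refine squeeze_zero (fun _ => norm_nonneg _) (fun n => ?_) hlim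
  rw [norm_sub_rev]
  exact hrem n

/-- Let `V` be analytic on an open set `U ∋ 0` in `ℂ²` and let
`X.g = Dg[V]` be the associated derivation, with iterates `Xⁿ.g`.  Then there are
`r > 0` and `ε > 0` such that for any `p` with `‖p‖ < r`, any `t ∈ [0, ε)`, and any
solution curve `α` of `α′ = V(α)` with `α(0) = p` staying in `U` on `[0, t]`, the Lie
series converges coordinatewise to the flow:
`∑_{n≥0} (tⁿ/n!)·(Xⁿ.πᵢ)(p)` has sum `πᵢ(α(t))` for each coordinate projection `πᵢ`. -/
theorem lie_series_of_flow (U : Set (ℂ × ℂ)) (hU : IsOpen U) (h0 : (0 : ℂ × ℂ) ∈ U)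
    (V : ℂ × ℂ → ℂ × ℂ) (hV : AnalyticOnNhd ℂ V U) :
    ∃ r > (0 : ℝ), ∃ ε > (0 : ℝ), ∀ p : ℂ × ℂ, ‖p‖ < r → ∀ t ∈ Ico (0 : ℝ) ε,
      ∀ α : ℝ → ℂ × ℂ, α 0 = p →
        (∀ s ∈ Icc (0 : ℝ) t, α s ∈ U ∧ HasDerivAt α (V (α s)) s) →
        HasSum (fun n : ℕ => ((t : ℂ) ^ n / n !) * (lieD V)^[n] Prod.fst p) (α t).1 ∧
        HasSum (fun n : ℕ => ((t : ℂ) ^ n / n !) * (lieD V)^[n] Prod.snd p) (α t).2 := by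
  obtain ⟨R, hR, hball⟩ : ∃ R > 0, Metric.ball (0 : ℂ × ℂ) R ⊆ {x | x ∈ U ∧ ‖V x‖ < ‖V 0‖ + 1} := by
    refine Metric.mem_nhds_iff.1 (Filter.inter_mem (hU.mem_nhds h0) ?_)
    exact (hV 0 h0).continuousAt.norm.eventually_lt_const (by linarith)
  have hVR : AnalyticOnNhd ℂ V (Metric.ball 0 R) := hV.mono fun x hx => (hball hx).1
  have hM : ∀ x, ‖x‖ < R → ‖V x‖ < ‖V 0‖ + 1 := fun x hx => (hball (by simpa using hx)).2
  have hM0 : 0 < ‖V 0‖ + 1 := by positivity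
  refine ⟨R / 4, by positivity, R / (16 * (‖V 0‖ + 1)), by positivity, ?_⟩
  rintro p hp t ⟨ht0, ht⟩ α rfl hα
  have htM : 16 * ((‖V 0‖ + 1) * t) < R := by
    rw [lt_div_iff₀ (by positivity)] at ht
    linarith
  exact ⟨hasSum_lie_series hR hVR (fun _ _ => analyticAt_fst) hM
      (fun x hx => (norm_fst_le x).trans hx.le) ht0 htM hp fun s hs => (hα s hs).2,
    hasSum_lie_series hR hVR (fun _ _ => analyticAt_snd) hM
      (fun x hx => (norm_snd_le x).trans hx.le) ht0 htM hp fun s hs => (hα s hs).2⟩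
end

section
/- Let w : ℂ → ℂ be analytic on a neighborhood U of 0 with w(z) = c·z^h + O(z^{h+1}) for some c ∈ ℂ and integer h ≥ 2 (i.e., w has a zero of order ≥ h at 0). Suppose g is the time-one flow of the vector field w(z)·∂/∂z near 0: there is an open set W ∋ 0 such that for every z ∈ W there is a curve α_z : ℝ → ℂ with α_z(0) = z, α_z(s) ∈ U and α_z′(s) = w(α_z(s)) for all s ∈ [0, 1], and g(z) = α_z(1). Then g(z) − z − w(z) = O(z^{2h−1}) as z → 0; in particular g(z) = z + c·z^h + O(z^{h+1}), so g is tangent to the identity with the same leading jet as w. -/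
/-! Near `0` the jet hypothesis gives `‖w z‖ ≤ C ‖z‖ ^ h`, and since `h ≥ 2` this speed is much smaller
than `‖z‖`: an integral curve starting at distance at most `ρ` from `0` stays in the ball of
radius `2ρ` up to time one (`norm_flow_le`). On that ball the speed is at most `C (2ρ) ^ h`, and
Cauchy's estimate on circles of radius `ρ` shows that `w` is Lipschitz there with constant
`C (3ρ) ^ h / ρ` (`lipschitz_estimate`). So along the curve `w (α s)` differs from `w z` by at most
the product of the two, which is a constant times `ρ ^ (2h - 1)`, and integrating over `[0, 1]`
bounds `α 1 - z - w z` by the same quantity (`norm_flow_sub_le`). The second claim follows from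
the first because `2h - 1 ≥ h + 1`.
-/

open Set Filter Topology Asymptotics

/-- A priori bound: the curve cannot cross the moving barrier `ρ (1 + s)`, because where it meets
the barrier its speed is at most `C (2ρ) ^ h < ρ`. The case `α 0 = 0` is allowed. -/
lemma norm_flow_le {w : ℂ → ℂ} {C r ρ : ℝ} {h : ℕ} (hC : 0 < C)
    (hb : ∀ z ∈ Metric.ball (0 : ℂ) r, ‖w z‖ ≤ C * ‖z‖ ^ h)
    (hr : 3 * ρ < r) (hρ : 0 < ρ) (hs : C * (2 * ρ) ^ h < ρ)
    {α : ℝ → ℂ} (hα : ∀ s ∈ Icc (0 : ℝ) 1, HasDerivAt α (w (α s)) s) (h0 : ‖α 0‖ ≤ ρ) :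
    ∀ s ∈ Icc (0 : ℝ) 1, ‖α s‖ ≤ 2 * ρ := by
  have key : ∀ ⦃s⦄, s ∈ Icc (0 : ℝ) 1 → ‖α s‖ ≤ ρ * (1 + s) := by
    refine image_norm_le_of_norm_deriv_right_lt_deriv_boundary (f' := fun s => w (α s))
      (B := fun s => ρ * (1 + s)) (B' := fun _ => ρ)
      (fun s hs => (hα s hs).continuousAt.continuousWithinAt)
      (fun s hs => (hα s (Ico_subset_Icc_self hs)).hasDerivWithinAt) (by simpa using h0) ?_ ?_
    · intro s
      simpa using ((hasDerivAt_id s).const_add 1).const_mul ρ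
    · intro s hs' he
      have h2 : ‖α s‖ ≤ 2 * ρ := by rw [he]; nlinarith [hs'.2]
      calc ‖w (α s)‖ ≤ C * ‖α s‖ ^ h := hb _ (by rw [mem_ball_zero_iff]; linarith)
        _ ≤ C * (2 * ρ) ^ h := by gcongr
        _ < ρ := hs
  intro s hs'
  have := key hs'
  nlinarith [hs'.2]

/-- Cauchy's estimate on circles of radius `ρ` around points of the closed ball of radius `2ρ`. -/
lemma lipschitz_estimate {w : ℂ → ℂ} {C r ρ : ℝ} {h : ℕ} (hC : 0 < C)
    (hd : DifferentiableOn ℂ w (Metric.ball 0 r))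
    (hb : ∀ z ∈ Metric.ball (0 : ℂ) r, ‖w z‖ ≤ C * ‖z‖ ^ h)
    (hr : 3 * ρ < r) (hρ : 0 < ρ) {x y : ℂ} (hx : ‖x‖ ≤ 2 * ρ) (hy : ‖y‖ ≤ 2 * ρ) :
    ‖w y - w x‖ ≤ C * (3 * ρ) ^ h / ρ * ‖y - x‖ := by
  refine (convex_closedBall (0 : ℂ) (2 * ρ)).norm_image_sub_le_of_norm_deriv_le (𝕜 := ℂ)
    (fun z hz => ?_) (fun z hz => ?_) (by simpa using hx) (by simpa using hy)
  · rw [mem_closedBall_zero_iff] at hz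
    exact hd.differentiableAt (Metric.isOpen_ball.mem_nhds (by
      rw [mem_ball_zero_iff]; linarith))
  · rw [mem_closedBall_zero_iff] at hz
    have hsub : Metric.closedBall z ρ ⊆ Metric.ball 0 r := fun u hu => by
      rw [mem_closedBall_iff_norm] at hu
      rw [mem_ball_zero_iff]
      linarith [norm_le_norm_add_norm_sub z u, norm_sub_rev z u]
    refine Complex.norm_deriv_le_of_forall_mem_sphere_norm_le hρ ?_ fun u hu => ?_
    · exact (hd.mono (closure_ball z hρ.ne' ▸ hsub)).diffContOnCl
    · have hu' := Metric.sphere_subset_closedBall hu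
      refine (hb u (hsub hu')).trans ?_
      rw [mem_closedBall_iff_norm] at hu'
      have : ‖u‖ ≤ 3 * ρ := by linarith [norm_le_norm_add_norm_sub z u, norm_sub_rev z u]
      gcongr

/-- The right-hand side is the Lipschitz constant of `w` times the bound for its size, both on
the closed ball of radius `2ρ`; it is a constant times `ρ ^ (2h - 1)`. -/
lemma norm_flow_sub_le {w : ℂ → ℂ} {C r ρ : ℝ} {h : ℕ} (hC : 0 < C)
    (hd : DifferentiableOn ℂ w (Metric.ball 0 r))
    (hb : ∀ z ∈ Metric.ball (0 : ℂ) r, ‖w z‖ ≤ C * ‖z‖ ^ h)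
    (hr : 3 * ρ < r) (hρ : 0 < ρ) (hs : C * (2 * ρ) ^ h < ρ)
    {α : ℝ → ℂ} (hα : ∀ s ∈ Icc (0 : ℝ) 1, HasDerivAt α (w (α s)) s) (h0 : ‖α 0‖ ≤ ρ) :
    ‖α 1 - α 0 - w (α 0)‖ ≤ C * (3 * ρ) ^ h / ρ * (C * (2 * ρ) ^ h) := by
  have hB := norm_flow_le hC hb hr hρ hs hα h0
  have hdist : ∀ s ∈ Icc (0 : ℝ) 1, ‖α s - α 0‖ ≤ C * (2 * ρ) ^ h := by
    intro s hs'
    have := norm_image_sub_le_of_norm_deriv_le_segment' (C := C * (2 * ρ) ^ h)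
      (fun s hs => (hα s hs).hasDerivWithinAt) (fun s hs => ?_) s hs'
    · refine this.trans ?_
      have h1 : 0 ≤ C * (2 * ρ) ^ h := by positivity
      nlinarith [hs'.2]
    · have h2 := hB s (Ico_subset_Icc_self hs)
      refine (hb _ (by rw [mem_ball_zero_iff]; linarith)).trans ?_
      gcongr
  -- The mean value inequality for `s ↦ α s - s w (α 0)`, whose derivative is `w (α s) - w (α 0)`.
  have hder : ∀ s ∈ Icc (0 : ℝ) 1, HasDerivWithinAt (fun t : ℝ => α t - t * w (α 0))
      (w (α s) - w (α 0)) (Icc 0 1) s := by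
    intro s hs'
    have h1 : HasDerivAt (fun t : ℝ => (t : ℂ) * w (α 0)) (w (α 0)) s := by
      simpa using (Complex.ofRealCLM.hasDerivAt (x := s)).mul_const (w (α 0))
    exact ((hα s hs').sub h1).hasDerivWithinAt
  have hfin := norm_image_sub_le_of_norm_deriv_le_segment'
    (C := C * (3 * ρ) ^ h / ρ * (C * (2 * ρ) ^ h)) hder (fun s hs => ?_) 1 (by simp)
  · simpa [sub_right_comm] using hfin
  · have hs' := Ico_subset_Icc_self hs
    refine (lipschitz_estimate hC hd hb hr hρ (hB 0 (by simp)) (hB s hs')).trans ?_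
    have := hdist s hs'
    gcongr

/-- Let `w` be analytic on a neighborhood `U` of `0` in `ℂ` with
`w(z) = c·z^h + O(z^{h+1})` for some `h ≥ 2`, and let `g` be the time-one flow of the
vector field `w(z)·∂/∂z` near `0`.  Then `g(z) - z - w(z) = O(z^{2h-1})` as `z → 0`;
in particular `g(z) = z + c·z^h + O(z^{h+1})`, so `g` is tangent to the identity with
the same leading jet as `w`. -/
theorem flow_tangent_to_identity_same_jet (U : Set ℂ) (hU : IsOpen U) (h0 : (0 : ℂ) ∈ U)
    (w : ℂ → ℂ) (hw : AnalyticOnNhd ℂ w U) (c : ℂ) (h : ℕ) (hh : 2 ≤ h)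
    (hjet : (fun z : ℂ => w z - c * z ^ h) =O[𝓝 0] fun z : ℂ => z ^ (h + 1))
    (g : ℂ → ℂ) (W : Set ℂ) (hW : IsOpen W) (hW0 : (0 : ℂ) ∈ W)
    (hflow : ∀ z ∈ W, ∃ α : ℝ → ℂ, α 0 = z ∧
      (∀ s ∈ Icc (0 : ℝ) 1, α s ∈ U ∧ HasDerivAt α (w (α s)) s) ∧ g z = α 1) :
    ((fun z : ℂ => g z - z - w z) =O[𝓝 0] fun z : ℂ => z ^ (2 * h - 1)) ∧
    ((fun z : ℂ => g z - z - c * z ^ h) =O[𝓝 0] fun z : ℂ => z ^ (h + 1)) := by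
  have hpow : ∀ {m n : ℕ}, m ≤ n → (fun z : ℂ => z ^ n) =O[𝓝 0] fun z : ℂ => z ^ m := by
    intro m n hmn
    refine IsBigO.of_bound 1 ?_
    filter_upwards [Metric.ball_mem_nhds (0 : ℂ) one_pos] with z hz
    rw [mem_ball_zero_iff] at hz
    simpa using pow_le_pow_of_le_one (norm_nonneg z) hz.le hmn
  have hwO : w =O[𝓝 0] fun z : ℂ => z ^ h := by
    have h1 := (hjet.trans (hpow h.le_succ)).add
      ((isBigO_refl (fun z : ℂ => z ^ h) (𝓝 0)).const_mul_left c)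
    simpa using h1
  obtain ⟨C, hC, hCw⟩ := hwO.exists_pos
  obtain ⟨r, hr, hball⟩ := Metric.eventually_nhds_iff_ball.1
    (hCw.bound.and (hU.mem_nhds h0))
  have hb : ∀ z ∈ Metric.ball (0 : ℂ) r, ‖w z‖ ≤ C * ‖z‖ ^ h := fun z hz => by
    simpa using (hball z hz).1
  have hd : DifferentiableOn ℂ w (Metric.ball 0 r) := fun z hz =>
    (hw z (hball z hz).2).differentiableAt.differentiableWithinAt
  have hsmall : ∀ᶠ ρ : ℝ in 𝓝 0, 3 * ρ < r ∧ (0 < ρ → C * (2 * ρ) ^ h < ρ) := by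
    have e1 : ∀ᶠ ρ : ℝ in 𝓝 0, 3 * ρ < r :=
      (by fun_prop : Continuous fun ρ : ℝ => 3 * ρ).continuousAt.eventually_lt
        continuousAt_const (by simpa using hr)
    have e2 : ∀ᶠ ρ : ℝ in 𝓝 0, C * 2 ^ h * ρ ^ (h - 1) < 1 :=
      (by fun_prop : Continuous fun ρ : ℝ => C * 2 ^ h * ρ ^ (h - 1)).continuousAt.eventually_lt
        continuousAt_const (by simp [zero_pow (show h - 1 ≠ 0 by omega)])
    filter_upwards [e1, e2] with ρ h1 h2
    refine ⟨h1, fun hρ => ?_⟩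
    calc C * (2 * ρ) ^ h = C * 2 ^ h * ρ ^ (h - 1) * ρ := by
          rw [mul_pow, mul_assoc _ _ ρ, pow_sub_one_mul (by omega)]; ring
      _ < 1 * ρ := by gcongr
      _ = ρ := one_mul ρ
  have main : (fun z : ℂ => g z - z - w z) =O[𝓝 0] fun z : ℂ => z ^ (2 * h - 1) := by
    refine IsBigO.of_bound (C * 3 ^ h * (C * 2 ^ h)) ?_
    have hn : Tendsto (fun z : ℂ => ‖z‖) (𝓝 0) (𝓝 0) := by
      simpa using (continuous_norm (E := ℂ)).tendsto 0
    filter_upwards [hn.eventually hsmall, hW.mem_nhds hW0] with z hz hzW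
    obtain ⟨α, hα0, hα, hg⟩ := hflow z hzW
    have hα' := fun s hs => (hα s hs).2
    rcases eq_or_ne z 0 with rfl | hz0
    · have hw0 : w 0 = 0 := by
        simpa [zero_pow (show h ≠ 0 by omega)] using hb 0 (Metric.mem_ball_self hr)
      -- The a priori bound with arbitrarily small `ρ` forces the curve through `0` to end at `0`.
      have hα1 : ‖α 1‖ ≤ 0 := by
        have ht : Tendsto (fun ρ : ℝ => 2 * ρ) (𝓝[>] 0) (𝓝 0) := by
          have : Tendsto (fun ρ : ℝ => 2 * ρ) (𝓝 0) (𝓝 (2 * 0)) := tendsto_id.const_mul 2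
          simpa using this.mono_left nhdsWithin_le_nhds
        refine ge_of_tendsto ht ?_
        filter_upwards [hsmall.filter_mono nhdsWithin_le_nhds, self_mem_nhdsWithin] with ρ hρ hpos
        exact norm_flow_le hC hb hρ.1 hpos (hρ.2 hpos) hα'
          (by rw [hα0, norm_zero]; exact (mem_Ioi.1 hpos).le) 1 (by simp)
      have hg0 : g 0 = 0 := by rw [hg]; simpa using hα1
      simp only [hg0, hw0, sub_zero, norm_zero]
      positivity
    · have hpos : 0 < ‖z‖ := norm_pos_iff.2 hz0
      have := norm_flow_sub_le hC hd hb hz.1 hpos (hz.2 hpos) hα' (by rw [hα0])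
      rw [hα0, ← hg] at this
      refine this.trans_eq ?_
      rw [norm_pow, show 2 * h - 1 = h + (h - 1) by omega, pow_add, mul_pow, mul_pow]
      have he : ‖z‖ ^ h = ‖z‖ ^ (h - 1) * ‖z‖ := (pow_sub_one_mul (by omega) _).symm
      field_simp
      rw [he]
      ring
  refine ⟨main, ?_⟩
  have := (main.trans (hpow (show h + 1 ≤ 2 * h - 1 by omega))).add hjet
  simpa using this
end
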